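/- arXiv:2012.08411 — 3 statements merged into one kernel-verified Lean document; each statement's English description precedes it below -/
import Mathlib

section
/- Let T be a linear operator on an N-dimensional vector space over F_q. Suppose a_{0,1} = a_{0,2} = N ≥ a_{1,1} ≥ a_{1,2} ≥ a_{2,1} ≥ a_{2,2} ≥ ⋯ ≥ a_{r,1} ≥ a_{r,2} ≥ 0 = a_{r+1,1} = a_{r+1,2}, and that a_{i−1,1} ≥ 2a_{i,1} − a_{i,2} for 1 ≤ i ≤ r. Let A = {(j_1,…,j_r) : max(a_{i+1,2}, 2a_{i,2} − a_{i,1}) ≤ j_i ≤ a_{i,2} for 1 ≤ i ≤ r} and B = {(k_1,…,k_r) : a_{i,2} ≤ k_i ≤ a_{i,1} for 1 ≤ i ≤ r}. Then |[(a_{1,1},a_{1,2}),…,(a_{r,1},a_{r,2})]_T| = Σ_{(j_1,…,j_r) ∈ A} |[(a_{1,2},j_1),(a_{2,2},j_2),…,(a_{r,2},j_r)]_T| · ∏_{i=1}^{r} [a_{i−1,2} − (2a_{i,2} − j_i) choose a_{i,1} − (2a_{i,2} − j_i)]_q − Σ_{(k_1,…,k_r) ∈ B \ {(a_{1,2},…,a_{r,2})}}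 |[(a_{1,1},k_1),(a_{2,1},k_2),…,(a_{r,1},k_r)]_T| · ∏_{i=1}^{r} [k_i − a_{i+1,1} choose a_{i,2} − a_{i+1,1}]_q. -/
/-- The set `(a,b)_T` of subspaces `W` with `dim W = a` and `dim (W ∩ T⁻¹W) = b`. -/
def pairSet {F V : Type*} [Field F] [AddCommGroup V] [Module F V]
    (T : V →ₗ[F] V) (a b : ℕ) : Set (Submodule F V) :=
  {W | Module.finrank F W = a ∧ Module.finrank F ↥(W ⊓ W.comap T) = b}

/-- The set `[(a₁,₁,a₁,₂),…,(a_r,₁,a_r,₂)]_T`. -/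
def tupleSet {F V : Type*} [Field F] [AddCommGroup V] [Module F V]
    (T : V →ₗ[F] V) (r : ℕ) (a : Fin r → ℕ × ℕ) : Set (Fin r → Submodule F V) :=
  {W | (∀ i, W i ∈ pairSet T (a i).1 (a i).2) ∧
    ∀ (i : Fin r) (h : (i : ℕ) + 1 < r),
      W ⟨(i : ℕ) + 1, h⟩ ⊔ (W ⟨(i : ℕ) + 1, h⟩).map T ≤ W i}

/-- Gaussian binomial coefficient `[n choose k]_q`. -/
def gaussNat (q : ℕ) : ℕ → ℕ → ℕ
  | _, 0 => 1
  | 0, _ + 1 => 0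
  | n + 1, k + 1 => gaussNat q n k + q ^ (k + 1) * gaussNat q n (k + 1)

/-- Gaussian binomial coefficient `[n choose k]_q` with integer arguments; it is `0`
unless `0 ≤ k ≤ n`. -/
def gaussZ (q : ℕ) (n k : ℤ) : ℕ :=
  if 0 ≤ k ∧ k ≤ n then gaussNat q n.toNat k.toNat else 0

/-! Count in two ways the pairs of tuples `(W, U)` with `W₁ ⊇ U₁ ⊇ W₂ ⊇ U₂ ⊇ ⋯ ⊇ W_r ⊇ U_r`,
`T U_i ⊆ W_i`, `dim W_i = a_{i,1}` and `dim U_i = a_{i,2}`. Given `W`, the `U_i` range independently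
over the intervals `[W_{i+1}, W_i ∩ T⁻¹ W_i]`. Given `U`, the `W_i` range independently over the
intervals `[U_i + T U_i, U_{i-1}]`, and `dim (U_i + T U_i) = 2 dim U_i - dim (U_i ∩ T⁻¹ U_i)`.
A Gaussian binomial coefficient counts the subspaces of given dimension in an interval, so sorting
by the dimensions `k_i` of `W_i ∩ T⁻¹ W_i`, respectively `j_i` of `U_i ∩ T⁻¹ U_i`, gives two sums
with the same value. In the first one, the term with `k_i = a_{i,2}` for all `i` has coefficient
`1`, and solving for it is the recursion. -/

open Module

section FiberCounting

variable {E X K : Type*}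

theorem ncard_eq_sum_ncard_mul_of_ncard_fiber {I : Set E} {f : E → X} {s : Finset K}
    {S : K → Set X} {n : K → ℕ} (hI : I.Finite) (hS : ∀ k, (S k).Finite)
    (hdisj : (s : Set K).PairwiseDisjoint S) (hf : ∀ e ∈ I, ∃ k ∈ s, f e ∈ S k)
    (hn : ∀ k ∈ s, ∀ x ∈ S k, {e ∈ I | f e = x}.ncard = n k) :
    I.ncard = ∑ k ∈ s, (S k).ncard * n k := by
  classical
  lift I to Finset E using hI
  lift S to K → Finset X using hS
  simp only [Finset.mem_coe, Set.ncard_coe_finset] at *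
  have hmaps : Set.MapsTo f I (s.biUnion S) := fun e he => by simpa using hf e he
  have hdisj' : (s : Set K).PairwiseDisjoint S := fun k hk l hl hkl =>
    Finset.disjoint_coe.1 (hdisj hk hl hkl)
  rw [Finset.card_eq_sum_card_fiberwise hmaps, Finset.sum_biUnion hdisj']
  refine Finset.sum_congr rfl fun k hk => Finset.sum_const_nat fun x hx => ?_
  rw [← hn k hk x hx, ← Set.ncard_coe_finset, Finset.coe_filter]

theorem ncard_univ_pi {ι : Type*} [Fintype ι] {α : ι → Type*} (s : ∀ i, Set (α i)) :
    (Set.univ.pi s).ncard = ∏ i, (s i).ncard := by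
  simp_rw [Set.ncard_def, Set.encard_pi_eq_prod_encard, ENat.toNat_prod]

end FiberCounting

section GaussianBinomial

theorem gaussNat_eq_zero_of_lt (q : ℕ) {n k : ℕ} (h : n < k) : gaussNat q n k = 0 := by
  induction n generalizing k with
  | zero => obtain ⟨k, rfl⟩ := Nat.exists_eq_succ_of_ne_zero h.ne'; rfl
  | succ n ih =>
    obtain ⟨k, rfl⟩ := Nat.exists_eq_succ_of_ne_zero h.ne_bot
    simp [gaussNat, ih (Nat.succ_lt_succ_iff.1 h), ih (Nat.lt_of_succ_lt h)]

theorem gaussNat_self (q n : ℕ) : gaussNat q n n = 1 := by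
  induction n with
  | zero => rfl
  | succ n ih => simp [gaussNat, ih, gaussNat_eq_zero_of_lt q n.lt_succ_self]

theorem gaussZ_natCast (q n k : ℕ) : gaussZ q n k = gaussNat q n k := by
  by_cases h : k ≤ n
  · simp [gaussZ, h]
  · simp [gaussZ, h, gaussNat_eq_zero_of_lt q (not_le.1 h)]

theorem gaussZ_self (q : ℕ) {n : ℤ} (hn : 0 ≤ n) : gaussZ q n n = 1 := by
  lift n to ℕ using hn
  rw [gaussZ_natCast, gaussNat_self]

theorem prod_range_succ_pow_succ_sub_pow {R : Type*} [CommRing R] (q : R) (n k : ℕ) :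
    ∏ i ∈ Finset.range (k + 1), (q ^ (n + 1) - q ^ i) =
      (q ^ (n + 1) - 1) * q ^ k * ∏ i ∈ Finset.range k, (q ^ n - q ^ i) := by
  have hshift : ∀ i, q ^ (n + 1) - q ^ (i + 1) = q * (q ^ n - q ^ i) := fun i => by ring
  simp_rw [Finset.prod_range_succ', hshift, Finset.prod_mul_distrib]
  simp only [Finset.prod_const, Finset.card_range, pow_zero]
  ring

theorem gaussNat_mul_prod_pow_sub_pow {R : Type*} [CommRing R] (q n k : ℕ) :
    (gaussNat q n k : R) * ∏ i ∈ Finset.range k, ((q : R) ^ k - (q : R) ^ i) =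
      ∏ i ∈ Finset.range k, ((q : R) ^ n - (q : R) ^ i) := by
  induction n generalizing k with
  | zero =>
    cases k with
    | zero => simp [gaussNat]
    | succ k => simp [gaussNat, Finset.prod_range_succ']
  | succ n ih =>
    cases k with
    | zero => simp [gaussNat]
    | succ k =>
      have hk := ih k
      have hk_succ := ih (k + 1)
      rw [prod_range_succ_pow_succ_sub_pow, Finset.prod_range_succ _ k] at hk_succ
      rw [prod_range_succ_pow_succ_sub_pow, prod_range_succ_pow_succ_sub_pow]
      simp only [gaussNat]
      push_cast
      linear_combination (q : R) ^ (k + 1) * hk_succ + ((q : R) ^ (k + 1) - 1) * (q : R) ^ k * hk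

theorem prod_pow_sub_pow_ne_zero {q : ℤ} (hq : 1 < q) (k : ℕ) :
    ∏ i ∈ Finset.range k, (q ^ k - q ^ i) ≠ 0 :=
  Finset.prod_ne_zero_iff.2 fun _ hi =>
    sub_ne_zero.2 (pow_lt_pow_right₀ hq (Finset.mem_range.1 hi)).ne'

end GaussianBinomial

section Rank

theorem range_map_subtype_comap_mkQ {R M : Type*} [Ring R] [AddCommGroup M] [Module R M]
    {A B : Submodule R M} (hAB : A ≤ B) :
    Set.range (fun S : Submodule R (B ⧸ A.submoduleOf B) =>
      (S.comap (A.submoduleOf B).mkQ).map B.subtype) = Set.Icc A B := by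
  ext W
  constructor
  · rintro ⟨S, rfl⟩
    refine ⟨fun x hx => ⟨⟨x, hAB hx⟩, ?_, rfl⟩, Submodule.map_subtype_le _ _⟩
    exact Submodule.le_comap_mkQ (A.submoduleOf B) S hx
  · rintro ⟨hAW, hWB⟩
    refine ⟨(W.submoduleOf B).map (A.submoduleOf B).mkQ, ?_⟩
    have hsub : A.submoduleOf B ≤ W.submoduleOf B := Submodule.comap_mono hAW
    simp only [Submodule.comap_map_mkQ, sup_eq_right.2 hsub]
    rw [Submodule.submoduleOf, Submodule.map_comap_subtype, inf_eq_right.2 hWB]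

variable {F V V' : Type*} [Field F] [AddCommGroup V] [Module F V]
  [FiniteDimensional F V] [AddCommGroup V'] [Module F V']

theorem finrank_map_add_finrank_inf_ker (f : V →ₗ[F] V')
    (U : Submodule F V) :
    finrank F (U.map f) + finrank F ↥(U ⊓ LinearMap.ker f) = finrank F U := by
  rw [← LinearMap.finrank_range_add_finrank_ker (f.domRestrict U), LinearMap.range_domRestrict,
    LinearMap.ker_domRestrict, ← Submodule.finrank_map_subtype_eq, Submodule.map_comap_subtype]

theorem finrank_comap_mkQ (p : Submodule F V) (S : Submodule F (V ⧸ p)) :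
    finrank F (S.comap p.mkQ) = finrank F S + finrank F p := by
  rw [← finrank_map_add_finrank_inf_ker p.mkQ,
    Submodule.map_comap_eq_of_surjective p.mkQ_surjective, Submodule.ker_mkQ,
    inf_eq_right.2 (Submodule.le_comap_mkQ p S)]

theorem finrank_sup_map_add_finrank_inf_comap (T : V →ₗ[F] V) (U : Submodule F V) :
    finrank F ↥(U ⊔ U.map T) + finrank F ↥(U ⊓ U.comap T) = 2 * finrank F U := by
  have hsup := finrank_map_add_finrank_inf_ker U.mkQ (U ⊔ U.map T)
  have hU := finrank_map_add_finrank_inf_ker (U.mkQ ∘ₗ T) U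
  rw [Submodule.map_sup, Submodule.mkQ_map_self, bot_sup_eq, ← Submodule.map_comp,
    Submodule.ker_mkQ, inf_eq_right.2 le_sup_left] at hsup
  rw [LinearMap.ker_comp, Submodule.ker_mkQ] at hU
  lia

theorem setOf_linearIndependent_span_eq {W : Submodule F V} {k : ℕ} (hW : finrank F W = k) :
    {s : Fin k → V | LinearIndependent F s ∧ Submodule.span F (Set.range s) = W} =
      (fun t => W.subtype ∘ t) '' {t : Fin k → W | LinearIndependent F t} := by
  ext s
  constructor
  · rintro ⟨hs, hspan⟩
    have hmem : ∀ i, s i ∈ W := fun i => hspan ▸ Submodule.subset_span ⟨i, rfl⟩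
    exact ⟨fun i => ⟨s i, hmem i⟩, LinearIndependent.of_comp W.subtype hs, rfl⟩
  · rintro ⟨t, ht, rfl⟩
    have hs : LinearIndependent F (W.subtype ∘ t) := ht.map' W.subtype W.ker_subtype
    refine ⟨hs, Submodule.eq_of_le_of_finrank_eq ?_ ?_⟩
    · rw [Submodule.span_le]
      rintro _ ⟨i, rfl⟩
      exact (t i).2
    · simpa [hW] using finrank_span_eq_card hs

end Rank

section SubspaceCounting

variable {F V : Type*} [Field F] [Fintype F] [AddCommGroup V] [Module F V]
  [FiniteDimensional F V]

theorem ncard_linearIndependent (k : ℕ) :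
    ({s : Fin k → V | LinearIndependent F s}.ncard : ℤ) =
      ∏ i ∈ Finset.range k, ((Fintype.card F : ℤ) ^ finrank F V - (Fintype.card F : ℤ) ^ i) := by
  have : Finite V := Module.finite_of_finite F
  rcases le_or_gt k (finrank F V) with hk | hk
  · rw [← Nat.card_coe_set_eq, Set.coe_ofPred, card_linearIndependent hk, Nat.cast_prod,
      ← Fin.prod_univ_eq_prod_range fun i => (Fintype.card F : ℤ) ^ finrank F V - _ ^ i]
    refine Finset.prod_congr rfl fun i _ => ?_
    rw [Nat.cast_sub (Nat.pow_le_pow_right Fintype.card_pos (i.2.le.trans hk))]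
    push_cast
    rfl
  · have hempty : {s : Fin k → V | LinearIndependent F s} = ∅ :=
      Set.eq_empty_of_forall_notMem fun s hs =>
        hk.not_ge (by simpa using hs.fintype_card_le_finrank)
    rw [hempty, Set.ncard_empty, Finset.prod_eq_zero (Finset.mem_range.2 hk) (sub_self _),
      Nat.cast_zero]

-- Send each linearly independent `k`-tuple to its span; the tuples over a given `W` are the bases
-- of `W`, which are as numerous as the bases of `F ^ k`.
theorem ncard_setOf_finrank_eq (k : ℕ) :
    {W : Submodule F V | finrank F W = k}.ncard = gaussNat (Fintype.card F) (finrank F V) k := by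
  have : Finite V := Module.finite_of_finite F
  have hfiber : ∀ W ∈ {W : Submodule F V | finrank F W = k},
      {s ∈ {s : Fin k → V | LinearIndependent F s} | Submodule.span F (Set.range s) = W}.ncard =
        {t : Fin k → Fin k → F | LinearIndependent F t}.ncard := by
    intro W hW
    rw [Set.sep_ofPred, setOf_linearIndependent_span_eq hW,
      Set.ncard_image_of_injective _ W.injective_subtype.comp_left, ← Nat.cast_inj (R := ℤ),
      ncard_linearIndependent, ncard_linearIndependent, hW, finrank_fin_fun]
  have hcount := ncard_eq_sum_ncard_mul_of_ncard_fiber (s := {()}) (Set.toFinite _)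
    (fun _ => Set.toFinite _) (by simp) (fun s hs => ⟨(), by simp, by
      simpa using finrank_span_eq_card hs⟩) (fun _ _ => hfiber)
  rw [Finset.sum_singleton, ← Nat.cast_inj (R := ℤ), Nat.cast_mul, ncard_linearIndependent,
    ncard_linearIndependent, finrank_fin_fun, ← gaussNat_mul_prod_pow_sub_pow] at hcount
  have hcard : (1 : ℤ) < Fintype.card F := mod_cast Fintype.one_lt_card
  exact_mod_cast (mul_right_cancel₀ (prod_pow_sub_pow_ne_zero hcard k) hcount).symm

theorem ncard_Icc_finrank_eq {A B : Submodule F V} (hAB : A ≤ B) (d : ℕ) :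
    {W ∈ Set.Icc A B | finrank F W = d}.ncard =
      gaussZ (Fintype.card F) ((finrank F B : ℤ) - finrank F A) ((d : ℤ) - finrank F A) := by
  have hA : finrank F (A.submoduleOf B) = finrank F A :=
    (Submodule.submoduleOfEquivOfLe hAB).finrank_eq
  have hquot := Submodule.finrank_quotient_add_finrank (A.submoduleOf B)
  rcases lt_or_ge d (finrank F A) with hd | hd
  · have hempty : {W ∈ Set.Icc A B | finrank F W = d} = ∅ :=
      Set.eq_empty_of_forall_notMem fun W hW =>
        hd.not_ge (hW.2 ▸ Submodule.finrank_mono hW.1.1)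
    rw [hempty, Set.ncard_empty, gaussZ, if_neg (by lia)]
  obtain ⟨e, rfl⟩ := Nat.exists_eq_add_of_le' hd
  let pull : Submodule F (B ⧸ A.submoduleOf B) → Submodule F V := fun S =>
    (S.comap (A.submoduleOf B).mkQ).map B.subtype
  have hpull_inj : Function.Injective pull :=
    (Submodule.map_injective_of_injective B.injective_subtype).comp
      (Submodule.comap_injective_of_surjective (Submodule.mkQ_surjective _))
  have hpull_finrank : ∀ S, finrank F (pull S) = finrank F S + finrank F A := fun S => by
    rw [Submodule.finrank_map_subtype_eq, finrank_comap_mkQ, hA]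
  have himage : {W ∈ Set.Icc A B | finrank F W = e + finrank F A} =
      pull '' {S | finrank F S = e} := by
    rw [← range_map_subtype_comap_mkQ hAB]
    ext W
    constructor
    · rintro ⟨⟨S, rfl⟩, hS⟩
      exact ⟨S, Nat.add_right_cancel ((hpull_finrank S).symm.trans hS), rfl⟩
    · rintro ⟨S, rfl, rfl⟩
      exact ⟨⟨S, rfl⟩, hpull_finrank S⟩
  rw [himage, Set.ncard_image_of_injective _ hpull_inj, ncard_setOf_finrank_eq, ← gaussZ_natCast]
  congr 1 <;> lia

end SubspaceCounting

section Shift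

variable {α β : Type*} {r : ℕ}

/-- The tuple `(W₂, …, W_r, ⊥)`: the lower neighbours in a decreasing chain. -/
def nextOrBot [Bot α] (W : Fin r → α) (i : Fin r) : α :=
  if h : (i : ℕ) + 1 < r then W ⟨i + 1, h⟩ else ⊥

/-- The tuple `(⊤, U₁, …, U_{r-1})`: the upper neighbours in a decreasing chain. -/
def prevOrTop [Top α] (U : Fin r → α) (i : Fin r) : α :=
  if (i : ℕ) = 0 then ⊤ else U ⟨i - 1, by lia⟩

theorem apply_nextOrBot [Bot α] {f : α → β} {W : Fin r → α} {b : ℕ → β}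
    (hW : ∀ i : Fin r, f (W i) = b i) (hbot : f ⊥ = b r) (i : Fin r) :
    f (nextOrBot W i) = b (i + 1) := by
  by_cases h : (i : ℕ) + 1 < r
  · rw [nextOrBot, dif_pos h, hW]
  · rw [nextOrBot, dif_neg h, hbot, show (i : ℕ) + 1 = r by lia]

theorem apply_prevOrTop [Top α] {f : α → β} {U : Fin r → α} {c : ℕ → β}
    (hU : ∀ i : Fin r, f (U i) = c (i + 1)) (htop : f ⊤ = c 0) (i : Fin r) :
    f (prevOrTop U i) = c i := by
  by_cases h : (i : ℕ) = 0
  · rw [prevOrTop, if_pos h, htop, h]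
  · rw [prevOrTop, if_neg h, hU, Nat.sub_add_cancel (Nat.pos_of_ne_zero h)]

theorem nextOrBot_le_iff [Preorder α] [OrderBot α] {W U : Fin r → α} :
    nextOrBot W ≤ U ↔ ∀ (i : Fin r) (h : (i : ℕ) + 1 < r), W ⟨i + 1, h⟩ ≤ U i := by
  refine forall_congr' fun i => ?_
  by_cases h : (i : ℕ) + 1 < r <;> simp [nextOrBot, h]

theorem le_prevOrTop_iff [Preorder α] [OrderTop α] {W U : Fin r → α} :
    W ≤ prevOrTop U ↔ ∀ (i : Fin r) (h : (i : ℕ) + 1 < r), W ⟨i + 1, h⟩ ≤ U i := by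
  refine ⟨fun hWU i h => by simpa [prevOrTop] using hWU ⟨i + 1, h⟩, fun hWU i => ?_⟩
  rcases i with ⟨_ | i, hi⟩
  · simp [prevOrTop]
  · simpa [prevOrTop] using hWU ⟨i, by lia⟩ hi

theorem nextOrBot_le_iff_le_prevOrTop [Preorder α] [BoundedOrder α] {W U : Fin r → α} :
    nextOrBot W ≤ U ↔ W ≤ prevOrTop U :=
  nextOrBot_le_iff.trans le_prevOrTop_iff.symm

end Shift

section Chains

variable {F V : Type*} [Field F] [AddCommGroup V] [Module F V] {T : V →ₗ[F] V} {r : ℕ}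

theorem sup_map_le_iff {A B : Submodule F V} : A ⊔ A.map T ≤ B ↔ A ≤ B ⊓ B.comap T := by
  rw [sup_le_iff, le_inf_iff, Submodule.map_le_iff_le_comap]

theorem mem_tupleSet_iff_le_prevOrTop {a : Fin r → ℕ × ℕ} {W : Fin r → Submodule F V} :
    W ∈ tupleSet T r a ↔
      (∀ i, W i ∈ pairSet T (a i).1 (a i).2) ∧ (fun i => W i ⊔ (W i).map T) ≤ prevOrTop W :=
  and_congr_right' (le_prevOrTop_iff (W := fun i => W i ⊔ (W i).map T)).symm

theorem mem_tupleSet_iff_nextOrBot_le {a : Fin r → ℕ × ℕ} {W : Fin r → Submodule F V} :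
    W ∈ tupleSet T r a ↔
      (∀ i, W i ∈ pairSet T (a i).1 (a i).2) ∧ nextOrBot W ≤ fun i => W i ⊓ (W i).comap T := by
  rw [nextOrBot_le_iff]
  exact and_congr_right' (forall₂_congr fun _ _ => sup_map_le_iff)

theorem pairwise_disjoint_tupleSet (T : V →ₗ[F] V) (b : Fin r → ℕ) :
    Pairwise (Function.onFun Disjoint fun k : Fin r → ℕ => tupleSet T r fun i => (b i, k i)) :=
  fun _ _ hkl => Set.disjoint_left.2 fun _ hk hl =>
    hkl (funext fun i => (hk.1 i).2.symm.trans (hl.1 i).2)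

/-- The pairs of tuples `(W, U)` with `dim W i = (d i).1` and `dim U i = (d i).2` such that
`W₁ ⊇ U₁ ⊇ W₂ ⊇ U₂ ⊇ ⋯` and `T` maps each `U i` into `W i`. These are the objects counted twice. -/
def interlacedSet (T : V →ₗ[F] V) (d : Fin r → ℕ × ℕ) :
    Set ((Fin r → Submodule F V) × (Fin r → Submodule F V)) :=
  {p | (∀ i, finrank F (p.1 i) = (d i).1) ∧ (∀ i, finrank F (p.2 i) = (d i).2) ∧
    (∀ i, p.2 i ⊔ (p.2 i).map T ≤ p.1 i) ∧ nextOrBot p.1 ≤ p.2}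

section Projections

variable {d : Fin r → ℕ × ℕ} {p : (Fin r → Submodule F V) × (Fin r → Submodule F V)}

theorem fst_mem_tupleSet_of_mem_interlacedSet (hp : p ∈ interlacedSet T d) :
    p.1 ∈ tupleSet T r fun i => ((d i).1, finrank F ↥(p.1 i ⊓ (p.1 i).comap T)) :=
  mem_tupleSet_iff_nextOrBot_le.2
    ⟨fun i => ⟨hp.1 i, rfl⟩, hp.2.2.2.trans fun i => sup_map_le_iff.1 (hp.2.2.1 i)⟩

theorem snd_mem_tupleSet_of_mem_interlacedSet (hp : p ∈ interlacedSet T d) :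
    p.2 ∈ tupleSet T r fun i => ((d i).2, finrank F ↥(p.2 i ⊓ (p.2 i).comap T)) :=
  mem_tupleSet_iff_le_prevOrTop.2 ⟨fun i => ⟨hp.2.1 i, rfl⟩,
    le_trans hp.2.2.1 (nextOrBot_le_iff_le_prevOrTop.1 hp.2.2.2)⟩

variable [FiniteDimensional F V]

theorem finrank_fst_inf_comap_mem_Icc (hp : p ∈ interlacedSet T d) (i : Fin r) :
    finrank F ↥(p.1 i ⊓ (p.1 i).comap T) ∈ Finset.Icc (d i).2 (d i).1 := by
  rw [← hp.1 i, ← hp.2.1 i, Finset.mem_Icc]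
  exact ⟨Submodule.finrank_mono (sup_map_le_iff.1 (hp.2.2.1 i)),
    Submodule.finrank_mono inf_le_left⟩

theorem finrank_snd_inf_comap_mem_Icc (hp : p ∈ interlacedSet T d) (i : Fin r) :
    finrank F ↥(p.2 i ⊓ (p.2 i).comap T) ∈
      Finset.Icc (max (finrank F ↥(nextOrBot p.2 i)) (2 * (d i).2 - (d i).1)) (d i).2 := by
  have hnext := (mem_tupleSet_iff_nextOrBot_le.1 (snd_mem_tupleSet_of_mem_interlacedSet hp)).2 i
  have hsup := finrank_sup_map_add_finrank_inf_comap T (p.2 i)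
  have hsup_le := Submodule.finrank_mono (hp.2.2.1 i)
  rw [hp.1 i] at hsup_le
  rw [hp.2.1 i] at hsup
  refine Finset.mem_Icc.2 ⟨max_le (Submodule.finrank_mono hnext) (by lia), ?_⟩
  rw [← hp.2.1 i]
  exact Submodule.finrank_mono inf_le_left

end Projections

section Fibers

variable [Fintype F] [FiniteDimensional F V] {d : Fin r → ℕ × ℕ}

theorem ncard_interlacedSet_fiber_fst {W : Fin r → Submodule F V}
    (hdim : ∀ i, finrank F (W i) = (d i).1)
    (hchain : nextOrBot W ≤ fun i => W i ⊓ (W i).comap T) :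
    {p ∈ interlacedSet T d | p.1 = W}.ncard =
      ∏ i, gaussZ (Fintype.card F)
        ((finrank F ↥(W i ⊓ (W i).comap T) : ℤ) - finrank F ↥(nextOrBot W i))
        (((d i).2 : ℤ) - finrank F ↥(nextOrBot W i)) := by
  have hfiber : {p ∈ interlacedSet T d | p.1 = W} = (fun U => (W, U)) '' Set.univ.pi fun i =>
      {X ∈ Set.Icc (nextOrBot W i) (W i ⊓ (W i).comap T) | finrank F X = (d i).2} := by
    ext ⟨W', U⟩
    constructor
    · rintro ⟨⟨-, hU, hUW, hWU⟩, rfl⟩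
      exact ⟨U, fun i _ => ⟨⟨hWU i, sup_map_le_iff.1 (hUW i)⟩, hU i⟩, rfl⟩
    · rintro ⟨U, hU, hp⟩
      obtain ⟨rfl, rfl⟩ := Prod.mk.inj hp
      exact ⟨⟨hdim, fun i => (hU i trivial).2, fun i => sup_map_le_iff.2 (hU i trivial).1.2,
        fun i => (hU i trivial).1.1⟩, rfl⟩
  rw [hfiber, Set.ncard_image_of_injective _ (Prod.mk_right_injective W), ncard_univ_pi]
  exact Finset.prod_congr rfl fun i _ => ncard_Icc_finrank_eq (hchain i) _

theorem ncard_interlacedSet_fiber_snd {U : Fin r → Submodule F V}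
    (hdim : ∀ i, finrank F (U i) = (d i).2)
    (hchain : (fun i => U i ⊔ (U i).map T) ≤ prevOrTop U) :
    {p ∈ interlacedSet T d | p.2 = U}.ncard =
      ∏ i, gaussZ (Fintype.card F)
        ((finrank F ↥(prevOrTop U i) : ℤ) - finrank F ↥(U i ⊔ (U i).map T))
        (((d i).1 : ℤ) - finrank F ↥(U i ⊔ (U i).map T)) := by
  have hfiber : {p ∈ interlacedSet T d | p.2 = U} = (fun W => (W, U)) '' Set.univ.pi fun i =>
      {X ∈ Set.Icc (U i ⊔ (U i).map T) (prevOrTop U i) | finrank F X = (d i).1} := by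
    ext ⟨W, U'⟩
    constructor
    · rintro ⟨⟨hW, -, hUW, hWU⟩, rfl⟩
      exact ⟨W, fun i _ => ⟨⟨hUW i, nextOrBot_le_iff_le_prevOrTop.1 hWU i⟩, hW i⟩, rfl⟩
    · rintro ⟨W, hW, hp⟩
      obtain ⟨rfl, rfl⟩ := Prod.mk.inj hp
      exact ⟨⟨fun i => (hW i trivial).2, hdim, fun i => (hW i trivial).1.1,
        nextOrBot_le_iff_le_prevOrTop.2 fun i => (hW i trivial).1.2⟩, rfl⟩
  rw [hfiber, Set.ncard_image_of_injective _ (Prod.mk_left_injective U), ncard_univ_pi]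
  exact Finset.prod_congr rfl fun i _ => ncard_Icc_finrank_eq (hchain i) _

end Fibers

end Chains

section DoubleCounting

variable {F V : Type*} [Field F] [Fintype F] [AddCommGroup V] [Module F V]
  [FiniteDimensional F V]

theorem ncard_interlacedSet_eq_sum_fst (T : V →ₗ[F] V) (r : ℕ) (a : ℕ → ℕ × ℕ)
    (hlast : (a (r + 1)).1 = 0) :
    (interlacedSet T fun i : Fin r => a (i + 1)).ncard =
      ∑ k ∈ Fintype.piFinset fun i : Fin r => Finset.Icc (a (i + 1)).2 (a (i + 1)).1,
        (tupleSet T r fun i => ((a (i + 1)).1, k i)).ncard *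
          ∏ i : Fin r, gaussZ (Fintype.card F) ((k i : ℤ) - (a (i + 2)).1)
            (((a (i + 1)).2 : ℤ) - (a (i + 2)).1) := by
  have : Finite V := Module.finite_of_finite F
  refine ncard_eq_sum_ncard_mul_of_ncard_fiber (f := Prod.fst) (Set.toFinite _)
    (fun _ => Set.toFinite _) ((pairwise_disjoint_tupleSet T _).set_pairwise _) (fun p hp => ?_)
    fun k _ W hW => ?_
  · exact ⟨_, Fintype.mem_piFinset.2 (finrank_fst_inf_comap_mem_Icc hp),
      fst_mem_tupleSet_of_mem_interlacedSet hp⟩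
  · obtain ⟨hpair, hchain⟩ := mem_tupleSet_iff_nextOrBot_le.1 hW
    have hnext : ∀ i, finrank F ↥(nextOrBot W i) = (a (i + 2)).1 :=
      apply_nextOrBot (f := fun X : Submodule F V => finrank F X)
        (b := fun i => (a (i + 1)).1) (fun i => (hpair i).1) (by simp [hlast])
    rw [ncard_interlacedSet_fiber_fst (d := fun i => a (i + 1)) (fun i => (hpair i).1) hchain]
    simp_rw [hnext, (hpair _).2]

theorem ncard_interlacedSet_eq_sum_snd (T : V →ₗ[F] V) (r : ℕ) (a : ℕ → ℕ × ℕ)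
    (h0 : (a 0).2 = finrank F V) (hlast : (a (r + 1)).2 = 0) :
    (interlacedSet T fun i : Fin r => a (i + 1)).ncard =
      ∑ j ∈ Fintype.piFinset fun i : Fin r =>
          Finset.Icc (max (a (i + 2)).2 (2 * (a (i + 1)).2 - (a (i + 1)).1)) (a (i + 1)).2,
        (tupleSet T r fun i => ((a (i + 1)).2, j i)).ncard *
          ∏ i : Fin r, gaussZ (Fintype.card F) ((a i).2 - (2 * (a (i + 1)).2 - j i : ℤ))
            ((a (i + 1)).1 - (2 * (a (i + 1)).2 - j i : ℤ)) := by
  have : Finite V := Module.finite_of_finite F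
  refine ncard_eq_sum_ncard_mul_of_ncard_fiber (f := Prod.snd) (Set.toFinite _)
    (fun _ => Set.toFinite _) ((pairwise_disjoint_tupleSet T _).set_pairwise _) (fun p hp => ?_)
    fun j _ U hU => ?_
  · refine ⟨_, Fintype.mem_piFinset.2 fun i => ?_, snd_mem_tupleSet_of_mem_interlacedSet hp⟩
    have hnext := apply_nextOrBot (f := fun X : Submodule F V => finrank F X)
      (b := fun i => (a (i + 1)).2) hp.2.1 (by simp [hlast]) i
    simpa only [hnext] using finrank_snd_inf_comap_mem_Icc hp i
  · obtain ⟨hpair, hchain⟩ := mem_tupleSet_iff_le_prevOrTop.1 hU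
    have hprev : ∀ i, finrank F ↥(prevOrTop U i) = (a i).2 :=
      apply_prevOrTop (f := fun X : Submodule F V => finrank F X)
        (c := fun i => (a i).2) (fun i => (hpair i).1) (by simp [h0])
    have hsup : ∀ i, (finrank F ↥(U i ⊔ (U i).map T) : ℤ) = 2 * (a (i + 1)).2 - j i := fun i => by
      have := finrank_sup_map_add_finrank_inf_comap T (U i)
      rw [(hpair i).1, (hpair i).2] at this
      lia
    rw [ncard_interlacedSet_fiber_snd (d := fun i => a (i + 1)) (fun i => (hpair i).1) hchain]
    simp_rw [hprev, hsup]

theorem tupleSet_ncard_recursion_general (T : V →ₗ[F] V) (r : ℕ) (a : ℕ → ℕ × ℕ)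
    (h0 : (a 0).2 = finrank F V) (hlast : a (r + 1) = (0, 0))
    (h1 : ∀ i < r, (a (i + 1)).2 ≤ (a (i + 1)).1)
    (h2 : ∀ i < r, (a (i + 2)).1 ≤ (a (i + 1)).2) :
    ((tupleSet T r fun i => a (i + 1)).ncard : ℤ) =
      (∑ j ∈ Fintype.piFinset fun i : Fin r =>
          Finset.Icc (max (a (i + 2)).2 (2 * (a (i + 1)).2 - (a (i + 1)).1)) (a (i + 1)).2,
        ((tupleSet T r fun i => ((a (i + 1)).2, j i)).ncard : ℤ) *
          ∏ i : Fin r, (gaussZ (Fintype.card F) ((a i).2 - (2 * (a (i + 1)).2 - j i : ℤ))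
            ((a (i + 1)).1 - (2 * (a (i + 1)).2 - j i : ℤ)) : ℤ)) -
      ∑ k ∈ (Fintype.piFinset fun i : Fin r => Finset.Icc (a (i + 1)).2 (a (i + 1)).1).erase
          fun i => (a (i + 1)).2,
        ((tupleSet T r fun i => ((a (i + 1)).1, k i)).ncard : ℤ) *
          ∏ i : Fin r, (gaussZ (Fintype.card F) ((k i : ℤ) - (a (i + 2)).1)
            ((a (i + 1)).2 - (a (i + 2)).1 : ℤ) : ℤ) := by
  have hmem : (fun i : Fin r => (a (i + 1)).2) ∈
      Fintype.piFinset fun i : Fin r => Finset.Icc (a (i + 1)).2 (a (i + 1)).1 :=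
    Fintype.mem_piFinset.2 fun i => Finset.left_mem_Icc.2 (h1 i i.2)
  have hcoeff : ∏ i : Fin r, gaussZ (Fintype.card F) ((a (i + 1)).2 - (a (i + 2)).1 : ℤ)
      ((a (i + 1)).2 - (a (i + 2)).1) = 1 :=
    Finset.prod_eq_one fun i _ => gaussZ_self _ (sub_nonneg.2 (mod_cast h2 i i.2))
  have hcount := (ncard_interlacedSet_eq_sum_fst T r a (by simp [hlast])).symm.trans
    (ncard_interlacedSet_eq_sum_snd T r a h0 (by simp [hlast]))
  rw [← Finset.add_sum_erase _ _ hmem, hcoeff, mul_one] at hcount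
  rw [eq_sub_iff_add_eq]
  exact_mod_cast hcount

end DoubleCounting

/-- the recursion of Lemma 2.5 (Chen–Tseng type recursion).
The sequence `a 0 = (N,N), a 1, …, a r, a (r+1) = (0,0)` encodes
`a_{i,1} = (a i).1` and `a_{i,2} = (a i).2`. -/
theorem tupleSet_ncard_recursion (F V : Type*) [Field F] [Fintype F]
    [AddCommGroup V] [Module F V] [FiniteDimensional F V]
    (T : V →ₗ[F] V) (N r : ℕ) (hN : Module.finrank F V = N)
    (a : ℕ → ℕ × ℕ)
    (h0 : a 0 = (N, N)) (hlast : a (r + 1) = (0, 0))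
    (h1 : ∀ i, 1 ≤ i → i ≤ r → (a i).2 ≤ (a i).1)
    (h2 : ∀ i, i ≤ r → (a (i + 1)).1 ≤ (a i).2)
    (h3 : ∀ i, 1 ≤ i → i ≤ r → 2 * (a i).1 ≤ (a (i - 1)).1 + (a i).2) :
    (Set.ncard (tupleSet T r (fun i => a ((i : ℕ) + 1))) : ℤ) =
      (∑ j ∈ Fintype.piFinset (fun i : Fin r =>
          Finset.Icc (max ((a ((i : ℕ) + 2)).2)
            (2 * (a ((i : ℕ) + 1)).2 - (a ((i : ℕ) + 1)).1)) ((a ((i : ℕ) + 1)).2)),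
        (Set.ncard (tupleSet T r (fun i => ((a ((i : ℕ) + 1)).2, j i))) : ℤ) *
          ∏ i : Fin r,
            (gaussZ (Fintype.card F)
              (((a (i : ℕ)).2 : ℤ) - (2 * ((a ((i : ℕ) + 1)).2 : ℤ) - (j i : ℤ)))
              (((a ((i : ℕ) + 1)).1 : ℤ) - (2 * ((a ((i : ℕ) + 1)).2 : ℤ) - (j i : ℤ))) : ℤ))
      - (∑ k ∈ (Fintype.piFinset (fun i : Fin r =>
            Finset.Icc ((a ((i : ℕ) + 1)).2) ((a ((i : ℕ) + 1)).1))).erase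
              (fun i : Fin r => (a ((i : ℕ) + 1)).2),
        (Set.ncard (tupleSet T r (fun i => ((a ((i : ℕ) + 1)).1, k i))) : ℤ) *
          ∏ i : Fin r,
            (gaussZ (Fintype.card F)
              ((k i : ℤ) - ((a ((i : ℕ) + 2)).1 : ℤ))
              (((a ((i : ℕ) + 1)).2 : ℤ) - ((a ((i : ℕ) + 2)).1 : ℤ)) : ℤ)) :=
  tupleSet_ncard_recursion_general T r a (by rw [h0, hN]) hlast
    (fun i hi => h1 (i + 1) i.succ_pos hi) fun i hi => h2 (i + 1) hi
end

section
/- Let T and T' be linear operators of the same similarity class type on finite-dimensional vector spaces over F_q. Then there exists a lattice isomorphism from L(T) to L(T') (a bijection preserving inclusions, intersections and sums) that preserves the dimension of every subspace. -/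
/-- `T` has similarity class type `τ`, where `τ` is a multiset of pairs
`(dᵢ, λᵢ)` with `dᵢ` the degree of a monic irreducible polynomial and `λᵢ` an
integer partition (a multiset of positive parts).  This holds when there is a
finite set `s` of distinct monic irreducible polynomials and partitions `lam p`
for `p ∈ s` such that `τ` is the multiset of pairs `(deg p, lam p)`, every monic
irreducible polynomial outside `s` acts invertibly on `V` (no primary component),
and for `p ∈ s` the `p`-primary elementary divisors of `T` are given by `lam p`;
the latter is recorded by the (characterizing) kernel dimensions
`dim ker p(T)^j = deg p · Σ_{a ∈ lam p} min a j`. -/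
def HasType {F V : Type*} [Field F] [AddCommGroup V] [Module F V]
    (τ : Multiset (ℕ × Multiset ℕ)) (T : V →ₗ[F] V) : Prop :=
  ∃ (s : Finset (Polynomial F)) (lam : Polynomial F → Multiset ℕ),
    (∀ p ∈ s, p.Monic ∧ Irreducible p) ∧
    (∀ p ∈ s, ∀ a ∈ lam p, 0 < a) ∧
    τ = s.val.map (fun p => (p.natDegree, lam p)) ∧
    (∀ p ∈ s, ∀ j : ℕ,
      Module.finrank F ↥(LinearMap.ker (Polynomial.aeval T (p ^ j))) =
        p.natDegree * ((lam p).map (fun a => min a j)).sum) ∧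
    (∀ p : Polynomial F, p.Monic → Irreducible p → p ∉ s →
      LinearMap.ker (Polynomial.aeval T p) = ⊥)

/-!
Let `σ` be a degree-preserving bijection from the primary support of `T` to that of `T'` matching
the partitions. Simple extensions of `F` of equal degree are isomorphic, so for every `p` some
polynomial `g` has `p ∣ σ(p) ∘ g`, that is, `g` maps a root of `p` to a root of `σ(p)`. Replacing
`g` by `g + p` if necessary, `p` divides `σ(p) ∘ g` exactly once because `σ(p)` is separable, and
the Chinese remainder theorem yields a single `g` for all `p`. Then `σ(p)(g(T)) ^ j` and `p(T) ^ j`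
have the same kernel, so `g(T)` is similar to `T'`. Symmetrically `T` is similar to a polynomial
in `T'`. Hence `F[g(T)] ⊆ F[T]` is an equality by comparing dimensions, so `g(T)` and `T` have the
same invariant subspaces, and the similarity of `g(T)` with `T'` carries them to those of `T'`.
-/

open Polynomial

universe u v w

section Multisets

theorem sum_map_min_succ (m : Multiset ℕ) (j : ℕ) :
    (m.map fun a => min a (j + 1)).sum = (m.map fun a => min a j).sum + m.countP (j < ·) := by
  induction m using Multiset.induction_on with
  | empty => simp
  | cons a m ih =>
    simp only [Multiset.map_cons, Multiset.sum_cons, Multiset.countP_cons, ih]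
    split_ifs <;> omega

theorem countP_lt_eq_count_succ_add (m : Multiset ℕ) (j : ℕ) :
    m.countP (j < ·) = m.count (j + 1) + m.countP (j + 1 < ·) := by
  induction m using Multiset.induction_on with
  | empty => simp
  | cons a m ih =>
    simp only [Multiset.countP_cons, Multiset.count_cons, ih]
    split_ifs <;> omega

theorem eq_of_sum_map_min_eq {m m' : Multiset ℕ} (hm : ∀ a ∈ m, 0 < a) (hm' : ∀ a ∈ m', 0 < a)
    (h : ∀ j, (m.map fun a => min a j).sum = (m'.map fun a => min a j).sum) : m = m' := by
  have hcountP (j : ℕ) : m.countP (j < ·) = m'.countP (j < ·) := by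
    have hj := h (j + 1)
    rwa [sum_map_min_succ, sum_map_min_succ, h j, Nat.add_left_cancel_iff] at hj
  ext a
  cases a with
  | zero =>
    rw [Multiset.count_eq_zero_of_notMem fun h0 => (hm 0 h0).false,
      Multiset.count_eq_zero_of_notMem fun h0 => (hm' 0 h0).false]
  | succ j =>
    have hj := hcountP j
    rwa [countP_lt_eq_count_succ_add m, countP_lt_eq_count_succ_add m', hcountP (j + 1),
      Nat.add_right_cancel_iff] at hj

theorem exists_equiv_of_map_univ_eq {α β γ : Type*} [Fintype α] [Fintype β] {f : α → γ}
    {g : β → γ} (h : Finset.univ.val.map f = Finset.univ.val.map g) :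
    ∃ e : α ≃ β, ∀ a, g (e a) = f a := by
  classical
  have hcard (c : γ) : Fintype.card {a // f a = c} = Fintype.card {b // g b = c} := by
    have hc := congrArg (Multiset.count c) h
    simp only [Multiset.count_map, eq_comm (a := c)] at hc
    rw [Fintype.card_subtype, Fintype.card_subtype]
    exact hc
  exact ⟨Equiv.ofFiberEquiv fun c => Fintype.equivOfCardEq (hcard c), Equiv.ofFiberEquiv_map _⟩

end Multisets

section Torsion

variable {F A : Type*} [Field F] [CommRing A] [Algebra F A]

theorem finrank_torsionBy_congr {M N : Type*}
    [AddCommGroup M] [Module F M] [Module A M] [IsScalarTower F A M]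
    [AddCommGroup N] [Module F N] [Module A N] [IsScalarTower F A N] (E : M ≃ₗ[A] N) (a : A) :
    Module.finrank F (Submodule.torsionBy A M a) =
      Module.finrank F (Submodule.torsionBy A N a) := by
  have hmap : (Submodule.torsionBy A M a).map E.toLinearMap = Submodule.torsionBy A N a := by
    ext y
    simp [Submodule.mem_map_equiv, Submodule.mem_torsionBy_iff, ← map_smul]
  exact ((E.ofSubmodules _ _ hmap).restrictScalars F).finrank_eq

theorem finrank_torsionBy_pi {ι : Type*} [Fintype ι] {N : ι → Type*}
    [∀ i, AddCommGroup (N i)] [∀ i, Module F (N i)] [∀ i, Module A (N i)]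
    [∀ i, IsScalarTower F A (N i)] [∀ i, FiniteDimensional F (N i)] (a : A) :
    Module.finrank F (Submodule.torsionBy A (∀ i, N i) a) =
      ∑ i, Module.finrank F (Submodule.torsionBy A (N i) a) := by
  have hfinite (i : ι) : FiniteDimensional F (Submodule.torsionBy A (N i) a) :=
    FiniteDimensional.finiteDimensional_submodule
      ((Submodule.torsionBy A (N i) a).restrictScalars F)
  rw [← Module.finrank_pi_fintype F]
  exact LinearEquiv.finrank_eq
    { toFun := fun x i => ⟨x.1 i, congrFun x.2 i⟩
      map_add' := fun _ _ => rfl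
      map_smul' := fun _ _ => rfl
      invFun := fun y => ⟨fun i => (y i).1, funext fun i => (y i).2⟩ }

theorem finrank_torsionBy_quotient (I : Ideal A) [FiniteDimensional F (A ⧸ I)] (a : A) :
    Module.finrank F (Submodule.torsionBy A (A ⧸ I) a) =
      Module.finrank F (A ⧸ I ⊔ Ideal.span {a}) := by
  let φ : (A ⧸ I) →ₗ[F] (A ⧸ I) := LinearMap.mulLeft F (Ideal.Quotient.mk I a)
  have hker : LinearMap.ker φ = (Submodule.torsionBy A (A ⧸ I) a).restrictScalars F := by
    ext x
    simp [φ, Submodule.mem_torsionBy_iff, Algebra.smul_def]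
  have hrange : LinearMap.range φ =
      ((Ideal.span {a}).map (Ideal.Quotient.mkₐ F I)).restrictScalars F := by
    ext x
    simp [φ, Ideal.map_span, Ideal.mem_span_singleton', mul_comm]
  have hcoker : Module.finrank F ((A ⧸ I) ⧸ LinearMap.range φ) =
      Module.finrank F (A ⧸ I ⊔ Ideal.span {a}) := by
    rw [hrange]
    exact (DoubleQuot.quotQuotEquivQuotSupₐ F I (Ideal.span {a})).toLinearEquiv.finrank_eq
  have hrank := φ.finrank_range_add_finrank_ker
  have hquot := (LinearMap.range φ).finrank_quotient_add_finrank
  rw [hker] at hrank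
  change _ + Module.finrank F (Submodule.torsionBy A (A ⧸ I) a) = _ at hrank
  omega

end Torsion

section PrimePowers

variable {F : Type*} [Field F] {p q : F[X]}

theorem isCoprime_of_monic_irreducible_ne (hpm : p.Monic) (hp : Irreducible p) (hqm : q.Monic)
    (hq : Irreducible q) (h : p ≠ q) : IsCoprime p q :=
  hp.coprime_iff_not_dvd.mpr fun hdvd =>
    h (eq_of_monic_of_associated hpm hqm (hp.associated_of_dvd hq hdvd))

theorem finiteDimensional_quotient_span (hp : p ≠ 0) :
    FiniteDimensional F (F[X] ⧸ Ideal.span {p}) :=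
  (AdjoinRoot.powerBasis hp).finite

theorem finrank_torsionBy_quotient_pow_self (hp : p ≠ 0) (e j : ℕ) :
    Module.finrank F (Submodule.torsionBy F[X] (F[X] ⧸ Ideal.span {p ^ e}) (p ^ j)) =
      p.natDegree * min e j := by
  have := finiteDimensional_quotient_span (pow_ne_zero e hp)
  have hsup : Ideal.span {p ^ e} ⊔ Ideal.span {p ^ j} = Ideal.span {p ^ min e j} := by
    rcases le_total e j with hej | hje
    · rw [min_eq_left hej, sup_eq_left]
      exact Ideal.span_singleton_le_span_singleton.mpr (pow_dvd_pow p hej)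
    · rw [min_eq_right hje, sup_eq_right]
      exact Ideal.span_singleton_le_span_singleton.mpr (pow_dvd_pow p hje)
  rw [finrank_torsionBy_quotient, hsup, finrank_quotient_span_eq_natDegree, natDegree_pow,
    mul_comm]

theorem finrank_torsionBy_quotient_of_isCoprime (hq : q ≠ 0) (h : IsCoprime q p) :
    Module.finrank F (Submodule.torsionBy F[X] (F[X] ⧸ Ideal.span {q}) p) = 0 := by
  have := finiteDimensional_quotient_span hq
  rw [finrank_torsionBy_quotient, (Ideal.isCoprime_span_singleton_iff q p).mpr h |>.sup_eq,
    Module.finrank_zero_iff]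
  infer_instance

end PrimePowers

section PrimaryDecomposition

/-- A decomposition of an `F[X]`-module into cyclic modules `F[X] ⧸ (p ^ e)` with `p` monic
irreducible and `0 < e`; the pairs `(prime i, exponent i)` are its elementary divisors. -/
structure PrimaryDecomposition (F : Type u) (M : Type v) [Field F] [AddCommGroup M]
    [Module F[X] M] where
  ι : Type u
  [fintype : Fintype ι]
  prime : ι → F[X]
  exponent : ι → ℕ
  monic (i : ι) : (prime i).Monic
  irreducible (i : ι) : Irreducible (prime i)
  exponent_pos (i : ι) : 0 < exponent i
  equiv : M ≃ₗ[F[X]] ∀ i, F[X] ⧸ Ideal.span {prime i ^ exponent i}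

attribute [instance] PrimaryDecomposition.fintype

/-- A product of modules is unchanged when trivial factors are dropped. -/
noncomputable def piEquivPiSubtypeOfSubsingleton {R ι : Type*} [Semiring R] (N : ι → Type*)
    [∀ i, AddCommGroup (N i)] [∀ i, Module R (N i)] (P : ι → Prop)
    (hN : ∀ i, ¬ P i → Subsingleton (N i)) : (∀ i, N i) ≃ₗ[R] ∀ i : {i // P i}, N i :=
  LinearEquiv.ofBijective (LinearMap.pi fun i => LinearMap.proj i.1) <| by
    classical
    constructor
    · intro x y hxy
      funext i
      by_cases hi : P i
      · exact congrFun hxy ⟨i, hi⟩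
      · exact (hN i hi).elim _ _
    · intro y
      exact ⟨fun i => if hi : P i then y ⟨i, hi⟩ else 0, funext fun i => dif_pos i.2⟩

variable {F : Type u} {M : Type v} {N : Type w} [Field F] [AddCommGroup M] [Module F[X] M]
  [AddCommGroup N] [Module F[X] N]

namespace PrimaryDecomposition

theorem nonempty_of_isTorsion [Module.Finite F[X] M] (h : Module.IsTorsion F[X] M) :
    Nonempty (PrimaryDecomposition F M) := by
  classical
  obtain ⟨ι, _, p, hp, e, ⟨E⟩⟩ := Module.equiv_directSum_of_isTorsion h
  have hspan (i : ι) : Ideal.span {p i ^ e i} = Ideal.span {normalize (p i) ^ e i} :=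
    Ideal.span_singleton_eq_span_singleton.mpr (normalize_associated (p i)).symm.pow_pow
  have htrivial (i : ι) (hi : ¬ 0 < e i) :
      Subsingleton (F[X] ⧸ Ideal.span {normalize (p i) ^ e i}) := by
    rw [Nat.eq_zero_of_not_pos hi, pow_zero, Ideal.span_singleton_one]
    infer_instance
  exact ⟨{
    ι := {i // 0 < e i}
    prime := fun i => normalize (p i)
    exponent := fun i => e i
    monic := fun i => monic_normalize (hp i).ne_zero
    irreducible := fun i => (normalize_associated (p i)).symm.irreducible (hp i)
    exponent_pos := Subtype.property
    equiv := E ≪≫ₗ DirectSum.linearEquivFunOnFintype F[X] ι _ ≪≫ₗ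
      LinearEquiv.piCongrRight (fun i => Submodule.quotEquivOfEq _ _ (hspan i)) ≪≫ₗ
      piEquivPiSubtypeOfSubsingleton _ _ htrivial }⟩

open Classical in
/-- The exponents of the elementary divisors at the prime `p`, i.e. the partition attached to `p`
in the similarity class type. -/
noncomputable def exponents (D : PrimaryDecomposition F M) (p : F[X]) : Multiset ℕ :=
  (Finset.univ.filter (D.prime · = p)).val.map D.exponent

theorem pos_of_mem_exponents (D : PrimaryDecomposition F M) {p : F[X]} {a : ℕ}
    (ha : a ∈ D.exponents p) : 0 < a := by
  obtain ⟨i, -, rfl⟩ := Multiset.mem_map.mp ha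
  exact D.exponent_pos i

theorem finrank_torsionBy_pow [Module F M] [IsScalarTower F F[X] M]
    (D : PrimaryDecomposition F M) {p : F[X]} (hpm : p.Monic) (hp : Irreducible p) (j : ℕ) :
    Module.finrank F (Submodule.torsionBy F[X] M (p ^ j)) =
      p.natDegree * ((D.exponents p).map fun a => min a j).sum := by
  classical
  have hfinite (i : D.ι) :
      FiniteDimensional F (F[X] ⧸ Ideal.span {D.prime i ^ D.exponent i}) :=
    finiteDimensional_quotient_span (pow_ne_zero _ (D.irreducible i).ne_zero)
  have hsummand (i : D.ι) : Module.finrank F (Submodule.torsionBy F[X]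
      (F[X] ⧸ Ideal.span {D.prime i ^ D.exponent i}) (p ^ j)) =
      if D.prime i = p then p.natDegree * min (D.exponent i) j else 0 := by
    split_ifs with hi
    · rw [hi, finrank_torsionBy_quotient_pow_self hp.ne_zero]
    · exact finrank_torsionBy_quotient_of_isCoprime
        (pow_ne_zero _ (D.irreducible i).ne_zero)
        (isCoprime_of_monic_irreducible_ne (D.monic i) (D.irreducible i) hpm hp hi).pow
  rw [finrank_torsionBy_congr D.equiv, finrank_torsionBy_pi, Finset.sum_congr rfl fun i _ =>
    hsummand i, ← Finset.sum_filter, ← Finset.mul_sum, exponents, Multiset.map_map]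
  rfl

open Classical in
theorem count_map_prime_exponent (D : PrimaryDecomposition F M) (p : F[X]) (a : ℕ) :
    (Finset.univ.val.map fun i => (D.prime i, D.exponent i)).count (p, a) =
      (D.exponents p).count a := by
  rw [exponents, Multiset.count_map, Multiset.count_map, Finset.filter_val,
    Multiset.filter_filter]
  simp only [Prod.mk.injEq, and_comm, eq_comm]

theorem exponents_eq_zero (D : PrimaryDecomposition F M) {p : F[X]}
    (hp : ¬ (p.Monic ∧ Irreducible p)) : D.exponents p = 0 := by
  classical
  rw [exponents, Multiset.map_eq_zero, Finset.val_eq_zero, Finset.filter_eq_empty_iff]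
  rintro i - rfl
  exact hp ⟨D.monic i, D.irreducible i⟩

theorem nonempty_linearEquiv_of_exponents_eq (D : PrimaryDecomposition F M)
    (D' : PrimaryDecomposition F N)
    (h : ∀ p : F[X], p.Monic → Irreducible p → D.exponents p = D'.exponents p) :
    Nonempty (M ≃ₗ[F[X]] N) := by
  classical
  have hpairs : (Finset.univ.val.map fun i => (D.prime i, D.exponent i)) =
      Finset.univ.val.map fun i => (D'.prime i, D'.exponent i) := by
    ext ⟨p, a⟩
    rw [count_map_prime_exponent, count_map_prime_exponent]
    by_cases hp : p.Monic ∧ Irreducible p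
    · rw [h p hp.1 hp.2]
    · rw [D.exponents_eq_zero hp, D'.exponents_eq_zero hp]
  obtain ⟨e, he⟩ := exists_equiv_of_map_univ_eq hpairs
  have hspan (i : D.ι) : Ideal.span {D.prime i ^ D.exponent i} =
      Ideal.span {D'.prime (e i) ^ D'.exponent (e i)} := by
    rw [(Prod.mk.inj (he i)).1, (Prod.mk.inj (he i)).2]
  exact ⟨D.equiv ≪≫ₗ
    LinearEquiv.piCongrRight (fun i => Submodule.quotEquivOfEq _ _ (hspan i)) ≪≫ₗ
    LinearEquiv.piCongrLeft F[X]
      (fun i => F[X] ⧸ Ideal.span {D'.prime i ^ D'.exponent i}) e ≪≫ₗ D'.equiv.symm⟩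

end PrimaryDecomposition

end PrimaryDecomposition

section Similarity

variable {F V V' : Type*} [Field F] [AddCommGroup V] [Module F V] [AddCommGroup V'] [Module F V']

theorem finrank_torsionBy_aeval' (T : V →ₗ[F] V) (f : F[X]) :
    Module.finrank F (Submodule.torsionBy F[X] (Module.AEval' T) f) =
      Module.finrank F (LinearMap.ker (aeval T f)) := by
  have hmap : (LinearMap.ker (aeval T f)).map (Module.AEval'.of T).toLinearMap =
      (Submodule.torsionBy F[X] (Module.AEval' T) f).restrictScalars F := by
    ext x
    obtain ⟨v, rfl⟩ := (Module.AEval'.of T).surjective x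
    simp [Submodule.mem_torsionBy_iff, ← Module.AEval.of_aeval_smul]
  exact (LinearEquiv.ofSubmodules _ _ _ hmap).finrank_eq.symm

theorem exists_conj_eq_of_linearEquiv {T : V →ₗ[F] V} {T' : V' →ₗ[F] V'}
    (E : Module.AEval' T ≃ₗ[F[X]] Module.AEval' T') :
    ∃ E : V ≃ₗ[F] V', E.conj T = T' := by
  let E₀ : V ≃ₗ[F] V' :=
    Module.AEval'.of T ≪≫ₗ E.restrictScalars F ≪≫ₗ (Module.AEval'.of T').symm
  have hE₀ (v : V) : E₀ (T v) = T' (E₀ v) := by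
    apply (Module.AEval'.of T').injective
    simp [E₀, ← Module.AEval'.X_smul_of]
  exact ⟨E₀, LinearMap.ext fun v => by simp [LinearEquiv.conj_apply, hE₀]⟩

theorem exists_conj_eq_of_finrank_ker_eq [FiniteDimensional F V] [FiniteDimensional F V']
    {T : V →ₗ[F] V} {T' : V' →ₗ[F] V'}
    (h : ∀ p : F[X], p.Monic → Irreducible p → ∀ j,
      Module.finrank F (LinearMap.ker (aeval T (p ^ j))) =
        Module.finrank F (LinearMap.ker (aeval T' (p ^ j)))) :
    ∃ E : V ≃ₗ[F] V', E.conj T = T' := by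
  obtain ⟨D⟩ := PrimaryDecomposition.nonempty_of_isTorsion
    (Module.AEval.isTorsion_of_finiteDimensional F V T)
  obtain ⟨D'⟩ := PrimaryDecomposition.nonempty_of_isTorsion
    (Module.AEval.isTorsion_of_finiteDimensional F V' T')
  obtain ⟨E⟩ := D.nonempty_linearEquiv_of_exponents_eq D' fun p hpm hp =>
    eq_of_sum_map_min_eq (fun _ => D.pos_of_mem_exponents) (fun _ => D'.pos_of_mem_exponents)
      fun j => Nat.eq_of_mul_eq_mul_left hp.natDegree_pos <| by
        rw [← D.finrank_torsionBy_pow hpm hp, ← D'.finrank_torsionBy_pow hpm hp,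
          finrank_torsionBy_aeval', finrank_torsionBy_aeval', h p hpm hp]
  exact exists_conj_eq_of_linearEquiv E

end Similarity

section Composition

variable {R : Type*} [CommRing R]

theorem comp_eq_eval_map_C (q g : R[X]) : q.comp g = (q.map C).eval g := by
  rw [eval_map, comp]

theorem sub_dvd_comp_sub_comp (q g g' : R[X]) : g - g' ∣ q.comp g - q.comp g' := by
  rw [comp_eq_eval_map_C, comp_eq_eval_map_C]
  exact sub_dvd_eval_sub g g' _

theorem not_dvd_comp_of_isCoprime {p q r g : R[X]} (hp : ¬ IsUnit p) (h : IsCoprime q r)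
    (hq : p ∣ q.comp g) : ¬ p ∣ r.comp g := fun hr =>
  hp ((h.map (compRingHom g)).isUnit_of_dvd' hq hr)

theorem exists_dvd_comp_of_algHom {p q : R[X]} (φ : AdjoinRoot q →ₐ[R] AdjoinRoot p) :
    ∃ g, p ∣ q.comp g := by
  obtain ⟨g, hg⟩ := AdjoinRoot.mk_surjective (φ (AdjoinRoot.root q))
  refine ⟨g, AdjoinRoot.mk_eq_zero.mp ?_⟩
  rw [← AdjoinRoot.aeval_eq, aeval_comp, AdjoinRoot.aeval_eq, hg, aeval_algHom_apply,
    AdjoinRoot.aeval_eq, AdjoinRoot.mk_self, map_zero]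

-- If `p ^ 2` divides `q.comp g`, then `q.comp (g + p)` is congruent to
-- `p * (derivative q).comp g` modulo `p ^ 2`, where the second factor is a unit modulo `p` by
-- separability.
theorem exists_dvd_comp_not_sq_dvd [IsDomain R] {p q g : R[X]} (hp : ¬ IsUnit p) (hp₀ : p ≠ 0)
    (hq : q.Separable) (hg : p ∣ q.comp g) : ∃ g', p ∣ q.comp g' ∧ ¬ p ^ 2 ∣ q.comp g' := by
  by_cases hg₂ : p ^ 2 ∣ q.comp g
  · obtain ⟨k, hk⟩ := (q.map C).binomExpansion g p
    rw [derivative_map, ← comp_eq_eval_map_C, ← comp_eq_eval_map_C, ← comp_eq_eval_map_C] at hk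
    have hderiv : ¬ p ∣ (derivative q).comp g := not_dvd_comp_of_isCoprime hp hq hg
    refine ⟨g + p, ?_, fun hsq => hderiv ?_⟩
    · have hsub := sub_dvd_comp_sub_comp q (g + p) g
      rw [add_sub_cancel_left] at hsub
      exact (dvd_iff_dvd_of_dvd_sub hsub).mpr hg
    · rw [hk, dvd_add_left (dvd_mul_left _ _), dvd_add_right hg₂, pow_two] at hsq
      exact (mul_dvd_mul_iff_right hp₀).mp hsq
  · exact ⟨g, hg, hg₂⟩

theorem exists_dvd_comp_sub_comp {ι : Type*} [Finite ι] {m : ι → R[X]}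
    (hm : Pairwise (Function.onFun IsCoprime m)) (x : ι → R[X]) :
    ∃ g, ∀ i (q : R[X]), m i ∣ q.comp g - q.comp (x i) := by
  obtain ⟨g, hg⟩ := Ideal.exists_forall_sub_mem_ideal (I := fun i => Ideal.span {m i})
    (fun i j hij => (Ideal.isCoprime_span_singleton_iff _ _).mpr (hm hij)) x
  exact ⟨g, fun i q =>
    (Ideal.mem_span_singleton.mp (hg i)).trans (sub_dvd_comp_sub_comp q g (x i))⟩

theorem exists_forall_dvd_comp_not_sq_dvd [IsDomain R] {ι : Type*} [Finite ι] {p q : ι → R[X]}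
    (hp : ∀ i, ¬ IsUnit (p i)) (hp₀ : ∀ i, p i ≠ 0) (hcop : Pairwise (Function.onFun IsCoprime p))
    (hq : ∀ i, (q i).Separable) (h : ∀ i, Nonempty (AdjoinRoot (q i) →ₐ[R] AdjoinRoot (p i))) :
    ∃ g, ∀ i, p i ∣ (q i).comp g ∧ ¬ p i ^ 2 ∣ (q i).comp g := by
  choose y hy using fun i => exists_dvd_comp_of_algHom (h i).some
  choose x hx hx₂ using fun i => exists_dvd_comp_not_sq_dvd (hp i) (hp₀ i) (hq i) (hy i)
  obtain ⟨g, hg⟩ := exists_dvd_comp_sub_comp (fun i j hij => (hcop hij).pow (m := 2) (n := 2)) x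
  refine ⟨g, fun i => ⟨?_, fun hsq => hx₂ i ((dvd_sub_right hsq).mp (hg i (q i)))⟩⟩
  exact (dvd_iff_dvd_of_dvd_sub ((dvd_pow_self _ two_ne_zero).trans (hg i (q i)))).mpr (hx i)

end Composition

section FieldExtensions

/-- Every two simple algebraic extensions of `F` of the same degree are isomorphic over `F`. -/
def UniqueSimpleExtensions (F : Type*) [Field F] : Prop :=
  ∀ ⦃p q : F[X]⦄, Irreducible p → Irreducible q → p.natDegree = q.natDegree →
    Nonempty (AdjoinRoot p ≃ₐ[F] AdjoinRoot q)

theorem uniqueSimpleExtensions_of_finite (F : Type*) [Field F] [Finite F] :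
    UniqueSimpleExtensions F := by
  intro p q hp hq hdeg
  obtain ⟨c, _⟩ := CharP.exists F
  have : Fact c.Prime := ⟨CharP.char_is_prime F c⟩
  have : NeZero p.natDegree := ⟨hp.natDegree_pos.ne'⟩
  have hextension {r : F[X]} (hr : Irreducible r) (h : r.natDegree = p.natDegree) :
      Nonempty (AdjoinRoot r ≃ₐ[F] FiniteField.Extension F c p.natDegree) := by
    have := Fact.mk hr
    exact ⟨FiniteField.algEquivExtension F c p.natDegree (AdjoinRoot r)
      (finrank_quotient_span_eq_natDegree.trans h)⟩
  obtain ⟨E⟩ := hextension hp rfl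
  obtain ⟨E'⟩ := hextension hq hdeg.symm
  exact ⟨E.trans E'.symm⟩

end FieldExtensions

section PrimarySupport

variable {F V : Type*} [Field F] [AddCommGroup V] [Module F V]

/-- A finite set `s` of monic irreducible polynomials containing all those `p` for which the
`p`-primary component of `T` is nonzero. -/
structure IsPrimarySupport (T : V →ₗ[F] V) (s : Finset F[X]) : Prop where
  monic {p : F[X]} (hp : p ∈ s) : p.Monic
  irreducible {p : F[X]} (hp : p ∈ s) : Irreducible p
  ker_eq_bot {p : F[X]} (hpm : p.Monic) (hp : Irreducible p) (hps : p ∉ s) :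
    LinearMap.ker (aeval T p) = ⊥

theorem ker_aeval_ne_bot_of_dvd_minpoly [FiniteDimensional F V] (T : V →ₗ[F] V) {p : F[X]}
    (hp : ¬ IsUnit p) (h : p ∣ minpoly F T) : LinearMap.ker (aeval T p) ≠ ⊥ := by
  intro hker
  obtain ⟨c, hc⟩ := h
  have haeval : aeval T c = 0 := by
    have hpc : aeval T p ∘ₗ aeval T c = 0 := by
      rw [← Module.End.mul_eq_comp, ← map_mul, ← hc, minpoly.aeval]
    rwa [← LinearMap.range_le_ker_iff, hker, le_bot_iff, LinearMap.range_eq_bot] at hpc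
  have hdvd : p * c ∣ 1 * c := by simpa only [one_mul, ← hc] using minpoly.dvd F T haeval
  have hc₀ : c ≠ 0 := right_ne_zero_of_mul (hc ▸ minpoly.ne_zero_of_finite F T)
  exact hp (isUnit_of_dvd_one ((mul_dvd_mul_iff_right hc₀).mp hdvd))

theorem ker_aeval_eq_bot_of_isCoprime_minpoly (T : V →ₗ[F] V) {f : F[X]}
    (h : IsCoprime f (minpoly F T)) : LinearMap.ker (aeval T f) = ⊥ := by
  simpa using disjoint_ker_aeval_of_isCoprime T h

namespace IsPrimarySupport

variable [FiniteDimensional F V] {T : V →ₗ[F] V} {s : Finset F[X]} (hs : IsPrimarySupport T s)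
include hs

theorem ker_aeval_eq_bot {f : F[X]} (hf : ∀ p ∈ s, ¬ p ∣ f) : LinearMap.ker (aeval T f) = ⊥ := by
  classical
  refine ker_aeval_eq_bot_of_isCoprime_minpoly T <| isCoprime_of_irreducible_dvd
    (fun h => minpoly.ne_zero_of_finite F T h.2) fun z hz hzf hzT => ?_
  have hassoc := normalize_associated z
  have hirr : Irreducible (normalize z) := hassoc.symm.irreducible hz
  exact ker_aeval_ne_bot_of_dvd_minpoly T hirr.not_isUnit (hassoc.dvd.trans hzT) <|
    hs.ker_eq_bot (monic_normalize hz.ne_zero) hirr fun hmem => hf _ hmem (hassoc.dvd.trans hzf)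

theorem ker_aeval_pow_eq {p f : F[X]} (hdvd : p ∣ f) (hsq : ¬ p ^ 2 ∣ f)
    (hne : ∀ r ∈ s, r ≠ p → ¬ r ∣ f) (j : ℕ) :
    LinearMap.ker (aeval T (f ^ j)) = LinearMap.ker (aeval T (p ^ j)) := by
  obtain ⟨u, rfl⟩ := hdvd
  have hu : LinearMap.ker (aeval T (u ^ j)) = ⊥ := by
    refine hs.ker_aeval_eq_bot fun r hr hru => ?_
    have hru := (hs.irreducible hr).prime.dvd_of_dvd_pow hru
    by_cases hrp : r = p
    · exact hsq (pow_two p ▸ mul_dvd_mul_left p (hrp ▸ hru))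
    · exact hne r hr hrp (hru.mul_left p)
  rw [mul_pow, mul_comm, map_mul, Module.End.mul_eq_comp, LinearMap.ker_comp_of_ker_eq_bot _ hu]

end IsPrimarySupport

end PrimarySupport

section SimilarPolynomials

variable {F V V' : Type*} [Field F] [AddCommGroup V] [Module F V] [AddCommGroup V'] [Module F V']
  {T : V →ₗ[F] V} {T' : V' →ₗ[F] V'}

theorem HasType.exists_equiv_isPrimarySupport {τ : Multiset (ℕ × Multiset ℕ)} (h : HasType τ T)
    (h' : HasType τ T') :
    ∃ s s' : Finset F[X], IsPrimarySupport T s ∧ IsPrimarySupport T' s' ∧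
      ∃ e : s ≃ s', ∀ p : s, (e p).1.natDegree = p.1.natDegree ∧ ∀ j,
        Module.finrank F (LinearMap.ker (aeval T' ((e p).1 ^ j))) =
          Module.finrank F (LinearMap.ker (aeval T (p.1 ^ j))) := by
  obtain ⟨s, lam, hs, -, hτ, hker, hbot⟩ := h
  obtain ⟨s', lam', hs', -, hτ', hker', hbot'⟩ := h'
  have htypes : (Finset.univ.val.map fun p : s => (p.1.natDegree, lam p)) =
      Finset.univ.val.map fun p : s' => (p.1.natDegree, lam' p) :=
    (Multiset.attach_map_val' s.val fun p => (p.natDegree, lam p)).trans <|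
      (hτ.symm.trans hτ').trans
        (Multiset.attach_map_val' s'.val fun p => (p.natDegree, lam' p)).symm
  obtain ⟨e, he⟩ := exists_equiv_of_map_univ_eq htypes
  simp only [Prod.mk.injEq] at he
  refine ⟨s, s', ⟨fun hp => (hs _ hp).1, fun hp => (hs _ hp).2, hbot _⟩,
    ⟨fun hp => (hs' _ hp).1, fun hp => (hs' _ hp).2, hbot' _⟩, e, fun p => ⟨(he p).1, fun j => ?_⟩⟩
  rw [hker p p.2, hker' (e p) (e p).2, (he p).1, (he p).2]

theorem exists_forall_finrank_ker_aeval_eq [PerfectField F] (hF : UniqueSimpleExtensions F)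
    [FiniteDimensional F V] [FiniteDimensional F V'] {τ : Multiset (ℕ × Multiset ℕ)}
    (h : HasType τ T) (h' : HasType τ T') :
    ∃ g : F[X], ∀ q : F[X], q.Monic → Irreducible q → ∀ j,
      Module.finrank F (LinearMap.ker (aeval (aeval T g) (q ^ j))) =
        Module.finrank F (LinearMap.ker (aeval T' (q ^ j))) := by
  obtain ⟨s, s', hs, hs', e, he⟩ := h.exists_equiv_isPrimarySupport h'
  obtain ⟨g, hg⟩ := exists_forall_dvd_comp_not_sq_dvd
    (p := fun p : s => p.1) (q := fun p : s => (e p).1)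
    (fun p => (hs.irreducible p.2).not_isUnit) (fun p => (hs.irreducible p.2).ne_zero)
    (fun p r hpr => isCoprime_of_monic_irreducible_ne (hs.monic p.2) (hs.irreducible p.2)
      (hs.monic r.2) (hs.irreducible r.2) (Subtype.coe_injective.ne hpr))
    (fun p => PerfectField.separable_of_irreducible (hs'.irreducible (e p).2))
    (fun p => (hF (hs'.irreducible (e p).2) (hs.irreducible p.2) (he p).1).map (·.toAlgHom))
  have hndvd {q : F[X]} (hqm : q.Monic) (hq : Irreducible q) (p : s) (hne : (e p).1 ≠ q) :
      ¬ p.1 ∣ q.comp g :=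
    not_dvd_comp_of_isCoprime (hs.irreducible p.2).not_isUnit
      (isCoprime_of_monic_irreducible_ne (hs'.monic (e p).2) (hs'.irreducible (e p).2)
        hqm hq hne) (hg p).1
  refine ⟨g, fun q hqm hq j => ?_⟩
  rw [← aeval_comp, pow_comp]
  by_cases hqs : q ∈ s'
  · obtain ⟨p, hp⟩ := e.surjective ⟨q, hqs⟩
    obtain rfl : (e p).1 = q := congrArg Subtype.val hp
    rw [hs.ker_aeval_pow_eq (hg p).1 (hg p).2 _ j, (he p).2 j]
    exact fun r hr hrp => hndvd hqm hq ⟨r, hr⟩ fun her =>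
      hrp (congrArg Subtype.val (e.injective (Subtype.ext her)))
  · have hbot : LinearMap.ker (aeval T (q.comp g ^ j)) = ⊥ := hs.ker_aeval_eq_bot fun p hp hdvd =>
      hndvd hqm hq ⟨p, hp⟩ (fun heq => hqs (heq ▸ (e ⟨p, hp⟩).2))
        ((hs.irreducible hp).prime.dvd_of_dvd_pow hdvd)
    have hbot' : LinearMap.ker (aeval T' (q ^ j)) = ⊥ := hs'.ker_aeval_eq_bot fun p hp hdvd =>
      (hs'.irreducible hp).coprime_iff_not_dvd.mp (isCoprime_of_monic_irreducible_ne
        (hs'.monic hp) (hs'.irreducible hp) hqm hq fun heq => hqs (heq ▸ hp))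
        ((hs'.irreducible hp).prime.dvd_of_dvd_pow hdvd)
    rw [hbot, hbot', finrank_bot, finrank_bot]

/-- `T'` is similar to a polynomial in `T`. -/
def IsSimilarToAeval (T : V →ₗ[F] V) (T' : V' →ₗ[F] V') : Prop :=
  ∃ (g : F[X]) (E : V ≃ₗ[F] V'), E.conj (aeval T g) = T'

theorem HasType.isSimilarToAeval [PerfectField F] (hF : UniqueSimpleExtensions F)
    [FiniteDimensional F V] [FiniteDimensional F V'] {τ : Multiset (ℕ × Multiset ℕ)}
    (h : HasType τ T) (h' : HasType τ T') : IsSimilarToAeval T T' := by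
  obtain ⟨g, hg⟩ := exists_forall_finrank_ker_aeval_eq hF h h'
  exact ⟨g, exists_conj_eq_of_finrank_ker_eq hg⟩

theorem finrank_adjoin_conj (E : V ≃ₗ[F] V') (T : V →ₗ[F] V) :
    Module.finrank F (Algebra.adjoin F {E.conj T}) = Module.finrank F (Algebra.adjoin F {T}) := by
  have hmap : (Algebra.adjoin F {T}).map (E.conjAlgEquiv F).toAlgHom =
      Algebra.adjoin F {E.conj T} := AlgHom.map_adjoin_singleton _ _
  rw [← hmap]
  exact ((Algebra.adjoin F {T}).equivMapOfInjective _
    (E.conjAlgEquiv F).injective).toLinearEquiv.finrank_eq.symm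

theorem adjoin_aeval_le (T : V →ₗ[F] V) (g : F[X]) :
    Algebra.adjoin F {aeval T g} ≤ Algebra.adjoin F {T} :=
  Algebra.adjoin_singleton_le (aeval_mem_adjoin_singleton F T)

theorem IsSimilarToAeval.finrank_adjoin_le [FiniteDimensional F V] (h : IsSimilarToAeval T T') :
    Module.finrank F (Algebra.adjoin F {T'}) ≤ Module.finrank F (Algebra.adjoin F {T}) := by
  obtain ⟨g, E, rfl⟩ := h
  rw [finrank_adjoin_conj]
  exact Submodule.finrank_mono (Subalgebra.toSubmodule.monotone (adjoin_aeval_le T g))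

theorem IsSimilarToAeval.adjoin_aeval_eq [FiniteDimensional F V] {g : F[X]} {E : V ≃ₗ[F] V'}
    (h : IsSimilarToAeval (E.conj (aeval T g)) T) :
    Algebra.adjoin F {aeval T g} = Algebra.adjoin F {T} := by
  have := E.finiteDimensional
  refine Subalgebra.eq_of_le_of_finrank_le (adjoin_aeval_le T g) ?_
  rw [← finrank_adjoin_conj E (aeval T g)]
  exact h.finrank_adjoin_le

theorem invtSubmodule_le_of_mem_adjoin {S : V →ₗ[F] V} (h : S ∈ Algebra.adjoin F {T}) :
    Module.End.invtSubmodule T ≤ Module.End.invtSubmodule S := by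
  obtain ⟨g, rfl⟩ := Algebra.adjoin_singleton_eq_range_aeval F T ▸ h
  exact fun W hW v hv => aeval_apply_smul_mem_of_le_comap' hv g T hW

theorem invtSubmodule_eq_of_adjoin_eq {S : V →ₗ[F] V}
    (h : Algebra.adjoin F {S} = Algebra.adjoin F {T}) :
    Module.End.invtSubmodule S = Module.End.invtSubmodule T :=
  le_antisymm (invtSubmodule_le_of_mem_adjoin (h ▸ Algebra.self_mem_adjoin_singleton F T))
    (invtSubmodule_le_of_mem_adjoin (h.symm ▸ Algebra.self_mem_adjoin_singleton F S))

theorem exists_linearEquiv_map_mem_invtSubmodule_iff [FiniteDimensional F V]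
    (h : IsSimilarToAeval T T') (h' : IsSimilarToAeval T' T) :
    ∃ E : V ≃ₗ[F] V', ∀ W : Submodule F V,
      W.map (E : V →ₗ[F] V') ∈ Module.End.invtSubmodule T' ↔ W ∈ Module.End.invtSubmodule T := by
  obtain ⟨g, E, rfl⟩ := h
  refine ⟨E, fun W => ?_⟩
  rw [E.map_mem_invtSubmodule_conj_iff, invtSubmodule_eq_of_adjoin_eq h'.adjoin_aeval_eq]

end SimilarPolynomials

theorem lattice_iso_of_same_type_general (F V V' : Type*) [Field F] [PerfectField F]
    (hF : UniqueSimpleExtensions F)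
    [AddCommGroup V] [Module F V] [FiniteDimensional F V]
    [AddCommGroup V'] [Module F V'] [FiniteDimensional F V']
    (T : V →ₗ[F] V) (T' : V' →ₗ[F] V')
    (h : ∃ τ : Multiset (ℕ × Multiset ℕ), HasType τ T ∧ HasType τ T') :
    ∃ e : {W : Submodule F V // W.map T ≤ W} ≃ {W : Submodule F V' // W.map T' ≤ W},
      (∀ W₁ W₂, W₁.1 ≤ W₂.1 ↔ (e W₁).1 ≤ (e W₂).1) ∧
      (∀ W₁ W₂ W₃, W₃.1 = W₁.1 ⊓ W₂.1 → (e W₃).1 = (e W₁).1 ⊓ (e W₂).1) ∧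
      (∀ W₁ W₂ W₃, W₃.1 = W₁.1 ⊔ W₂.1 → (e W₃).1 = (e W₁).1 ⊔ (e W₂).1) ∧
      (∀ W, Module.finrank F ↥(e W).1 = Module.finrank F ↥W.1) := by
  obtain ⟨τ, h, h'⟩ := h
  obtain ⟨E, hE⟩ := exists_linearEquiv_map_mem_invtSubmodule_iff
    (h.isSimilarToAeval hF h') (h'.isSimilarToAeval hF h)
  simp only [Module.End.mem_invtSubmodule_iff_map_le] at hE
  refine ⟨(Submodule.orderIsoMapComap E).toEquiv.subtypeEquiv fun W => (hE W).symm,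
    fun W₁ W₂ => ?_, fun W₁ W₂ W₃ hW => ?_, fun W₁ W₂ W₃ hW => ?_, fun W => ?_⟩
  · exact (Submodule.map_le_map_iff_of_injective E.injective W₁.1 W₂.1).symm
  · exact (congrArg _ hW).trans (Submodule.map_inf _ E.injective)
  · exact (congrArg _ hW).trans (Submodule.map_sup _ _ _)
  · exact LinearEquiv.finrank_map_eq E W.1

/-- operators of the same similarity class type have dimension-preserving
isomorphic lattices of invariant subspaces. -/
theorem lattice_iso_of_same_type (F V V' : Type*) [Field F] [Fintype F]
    [AddCommGroup V] [Module F V] [FiniteDimensional F V]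
    [AddCommGroup V'] [Module F V'] [FiniteDimensional F V']
    (T : V →ₗ[F] V) (T' : V' →ₗ[F] V')
    (h : ∃ τ : Multiset (ℕ × Multiset ℕ), HasType τ T ∧ HasType τ T') :
    ∃ e : {W : Submodule F V // W.map T ≤ W} ≃ {W : Submodule F V' // W.map T' ≤ W},
      (∀ W₁ W₂, W₁.1 ≤ W₂.1 ↔ (e W₁).1 ≤ (e W₂).1) ∧
      (∀ W₁ W₂ W₃, W₃.1 = W₁.1 ⊓ W₂.1 → (e W₃).1 = (e W₁).1 ⊓ (e W₂).1) ∧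
      (∀ W₁ W₂ W₃, W₃.1 = W₁.1 ⊔ W₂.1 → (e W₃).1 = (e W₁).1 ⊔ (e W₂).1) ∧
      (∀ W, Module.finrank F ↥(e W).1 = Module.finrank F ↥W.1) :=
  lattice_iso_of_same_type_general F V V' (uniqueSimpleExtensions_of_finite F) T T' h
end

section
/- Let T be a linear operator on an md-dimensional vector space V over F_q, let c ∈ F_q, and let I denote the identity operator on V. Then σ(m,d;T) = σ(m,d;T + cI). -/
/-- `W` is an `m`-dimensional `T`-splitting subspace: `V = W ⊕ TW ⊕ ⋯ ⊕ T^{d-1}W`. -/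
def IsSplittingSubspace {F V : Type*} [Field F] [AddCommGroup V] [Module F V]
    (T : V →ₗ[F] V) (m d : ℕ) (W : Submodule F V) : Prop :=
  Module.finrank F W = m ∧
  iSupIndep (fun i : Fin d => W.map (T ^ (i : ℕ))) ∧
  (⨆ i : Fin d, W.map (T ^ (i : ℕ))) = ⊤

/-- `σ(m,d;T)`, the number of `m`-dimensional `T`-splitting subspaces. -/
noncomputable def splitCount {F V : Type*} [Field F] [AddCommGroup V] [Module F V]
    (T : V →ₗ[F] V) (m d : ℕ) : ℕ :=
  Set.ncard {W : Submodule F V | IsSplittingSubspace T m d W}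

/-!
When `dim V = m * d`, a dimension count shows that an `m`-dimensional subspace `W` is splitting as
soon as the subspaces `W, TW, …, T^{d-1}W` span `V`: directness of the sum is then automatic.
By the binomial theorem, the span `∑_{i < d} T^i W` contains `∑_{i < d} (T + cI)^i W`, and
translating back by `-c` gives equality. Hence `T` and `T + cI` have the same splitting subspaces.
-/

theorem add_smul_one_pow {R A : Type*} [CommSemiring R] [Semiring A] [Algebra R A]
    (a : A) (c : R) (n : ℕ) :
    (a + c • (1 : A)) ^ n =
      ∑ j ∈ Finset.range (n + 1), (c ^ (n - j) * n.choose j) • a ^ j := by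
  have hcomm : Commute a (c • (1 : A)) := (Commute.one_right a).smul_right c
  rw [hcomm.add_pow]
  refine Finset.sum_congr rfl fun j _ => ?_
  rw [smul_pow, one_pow, mul_smul, Nat.cast_smul_eq_nsmul, nsmul_eq_mul, mul_smul_one,
    smul_mul_assoc, Nat.cast_comm]

theorem iSup_map_pow_add_smul_id_le {R M : Type*} [CommSemiring R] [AddCommMonoid M] [Module R M]
    (T : M →ₗ[R] M) (c : R) (d : ℕ) (W : Submodule R M) :
    ⨆ i : Fin d, W.map ((T + c • (LinearMap.id : M →ₗ[R] M)) ^ (i : ℕ)) ≤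
      ⨆ i : Fin d, W.map (T ^ (i : ℕ)) := by
  refine iSup_le fun i => ?_
  rintro _ ⟨w, hw, rfl⟩
  rw [← Module.End.one_eq_id, add_smul_one_pow, LinearMap.sum_apply]
  refine Submodule.sum_mem _ fun j hj => Submodule.smul_mem _ _ ?_
  have hjd : j < d := (Finset.mem_range_succ_iff.mp hj).trans_lt i.isLt
  exact Submodule.mem_iSup_of_mem ⟨j, hjd⟩ (Submodule.mem_map_of_mem hw)

theorem iSup_map_pow_add_smul_id {R M : Type*} [CommRing R] [AddCommGroup M] [Module R M]
    (T : M →ₗ[R] M) (c : R) (d : ℕ) (W : Submodule R M) :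
    ⨆ i : Fin d, W.map ((T + c • (LinearMap.id : M →ₗ[R] M)) ^ (i : ℕ)) =
      ⨆ i : Fin d, W.map (T ^ (i : ℕ)) := by
  refine (iSup_map_pow_add_smul_id_le T c d W).antisymm ?_
  have hback := iSup_map_pow_add_smul_id_le (T + c • LinearMap.id) (-c) d W
  rwa [neg_smul, add_neg_cancel_right] at hback

theorem iSupIndep_of_iSup_eq_top_of_sum_finrank_le {K V ι : Type*} [DivisionRing K]
    [AddCommGroup V] [Module K V] [FiniteDimensional K V] [Fintype ι] {p : ι → Submodule K V}
    (htop : ⨆ i, p i = ⊤) (hle : ∑ i, Module.finrank K (p i) ≤ Module.finrank K V) :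
    iSupIndep p := by
  classical
  let sumMap : (Π₀ i, p i) →ₗ[K] V := DFinsupp.lsum ℕ fun i => (p i).subtype
  have hsurj : Function.Surjective sumMap := by
    rw [← LinearMap.range_eq_top, ← Submodule.iSup_eq_range_dfinsupp_lsum, htop]
  have hdim : Module.finrank K (Π₀ i, p i) = Module.finrank K V :=
    ((Module.finrank_directSum K fun i => p i).trans_le hle).antisymm
      (LinearMap.finrank_le_finrank_of_surjective hsurj)
  exact iSupIndep_of_dfinsupp_lsum_injective p
    ((LinearMap.injective_iff_surjective_of_finrank_eq_finrank hdim).mpr hsurj)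

section Splitting

variable {F V : Type*} [Field F] [AddCommGroup V] [Module F V] [FiniteDimensional F V] {m d : ℕ}

theorem isSplittingSubspace_iff_iSup_eq_top (hdim : Module.finrank F V = m * d)
    (T : V →ₗ[F] V) (W : Submodule F V) :
    IsSplittingSubspace T m d W ↔
      Module.finrank F W = m ∧ ⨆ i : Fin d, W.map (T ^ (i : ℕ)) = ⊤ := by
  refine ⟨fun ⟨hW, _, htop⟩ => ⟨hW, htop⟩, fun ⟨hW, htop⟩ => ⟨hW, ?_, htop⟩⟩
  refine iSupIndep_of_iSup_eq_top_of_sum_finrank_le htop ?_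
  calc ∑ i : Fin d, Module.finrank F (W.map (T ^ (i : ℕ)))
      ≤ ∑ _i : Fin d, m := Finset.sum_le_sum fun i _ => (Submodule.finrank_map_le _ W).trans_eq hW
    _ = Module.finrank F V := by simp [hdim, mul_comm]

theorem splitCount_add_smul_id_general (hdim : Module.finrank F V = m * d)
    (T : V →ₗ[F] V) (c : F) :
    {W : Submodule F V | IsSplittingSubspace T m d W} =
      {W | IsSplittingSubspace (T + c • (LinearMap.id : V →ₗ[F] V)) m d W} := by
  ext W
  simp only [Set.mem_ofPred_eq, isSplittingSubspace_iff_iSup_eq_top hdim, iSup_map_pow_add_smul_id]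

end Splitting

/-- `σ(m,d;T) = σ(m,d;T + cI)`. -/
theorem splitCount_add_smul_id (F V : Type*) [Field F] [Fintype F]
    [AddCommGroup V] [Module F V] [FiniteDimensional F V]
    (m d : ℕ) (hm : 0 < m) (hd : 0 < d) (hdim : Module.finrank F V = m * d)
    (T : V →ₗ[F] V) (c : F) :
    splitCount T m d = splitCount (T + c • (LinearMap.id : V →ₗ[F] V)) m d :=
  congrArg Set.ncard (splitCount_add_smul_id_general hdim T c)
end
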